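/- arXiv:math/0407144 — 8 statements merged into one kernel-verified Lean document; each statement's English description precedes it below -/
import Mathlib

section
/- Let d ≥ 2 and s ≥ 2 be integers with (s,d) ∉ {(2,2),(2,3),(3,2)}. Then there exist vectors Δ_1, …, Δ_d ∈ ℤ^d, each admissible (i.e. each Δ_k has some coordinate equal to 1, all other coordinates ≤ 0, and at least one coordinate other than the 1 nonzero), such that for every integer μ ≥ 1 one has Δ_d(Δ_{d−1}(⋯(Δ_1(s·R_μ))⋯)) ⊇ R_{sμ+1}. -/
/-!
Every direction `Δ k` used below has `Δ k k = 1`, the other coordinates in `[-(s-1), 0]`, and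
coordinate sum `-1`, so that a step along `Δ k` lowers the degree `∑ i, p i` by one.

The staircase `s·R_μ` contains every point of degree `< s μ`, and a point of degree `s μ` is
missing from it exactly when it is `s q` with `|q| = μ`. If `q k ≥ 1`, then `s q - Δ k` lies in the
block of `q - e_k`, hence in `s·R_μ`. All points following `s q` on its line in direction `Δ k`
have degree `< s μ`, so they already belong to the set, and specialization along `Δ k` therefore uses
the extra point `s q - Δ k` to fill `s q` (`mem_deltaOf`). Every missing `s q` has a
nonzero coordinate, so the `d` directions together fill the whole diagonal of degree `s μ`.

The point `s q - Δ l` must survive the specializations along `Δ k` for `k < l`. It has degree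
`s μ + 1`, so the points following it have degree `< s μ`, except for the first one,
`s q - Δ l + Δ k`, of degree `s μ`; this one is present as soon as it is not divisible by `s`, that
is, if `Δ k` and `Δ l` are not congruent modulo `s`. `IsGoodSystem` collects these requirements and
`invariantSet` is the part of the successive specializations that is tracked.

Good systems are `Δ k = e_k - 2 e_{k+1}` for `d = 2`, `s ≥ 4`, and
`Δ k = e_k - e_{k+1} - e_{k+2}` (indices modulo `d`) for `d = 3`, `s ≥ 3` and for `d ≥ 4`, `s ≥ 2`.
-/

/-- Componentwise coercion `ℕ^d → ℤ^d`. -/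
def toInt {d : ℕ} (p : Fin d → ℕ) : Fin d → ℤ := fun i => (p i : ℤ)

/-- A staircase in `ℕ^d`: a subset whose complement is stable under addition
(equivalently, a downward closed subset). -/
def IsStaircase {d : ℕ} (E : Set (Fin d → ℕ)) : Prop :=
  ∀ x, x ∉ E → ∀ y : Fin d → ℕ, x + y ∉ E

/-- The regular staircase `R_μ = {α ∈ ℕ^d : α₁ + ⋯ + α_d < μ}`. -/
def regStaircase (d μ : ℕ) : Set (Fin d → ℕ) := {α | ∑ i, α i < μ}

/-- The scaled staircase `(a₁,…,a_d)·E = {m ∈ ℕ^d : (⌊m₁/a₁⌋,…,⌊m_d/a_d⌋) ∈ E}`. -/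
def scaleSet {d : ℕ} (a : Fin d → ℕ) (E : Set (Fin d → ℕ)) : Set (Fin d → ℕ) :=
  {m | (fun i => m i / a i) ∈ E}

/-- The points of `ℕ^d` on the line through `p` with direction `Δ`. -/
def lineThrough {d : ℕ} (Δ : Fin d → ℤ) (p : Fin d → ℕ) : Set (Fin d → ℕ) :=
  {q | ∃ t : ℤ, toInt q = toInt p + t • Δ}

/-- The specialization `Δ(E)` of a (finite) subset `E ⊆ ℕ^d` along the direction `Δ`:
`p ∈ Δ(E)` iff the number of integers `i > 0` with `p + iΔ ∈ ℕ^d` is strictly smaller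
than `#(E ∩ L_p)`, where `L_p` is the line through `p` with direction `Δ`.  Equivalently,
on each line `L` with direction `Δ`, `Δ(E) ∩ L` consists of the `#(E ∩ L)` largest
elements of `L ∩ ℕ^d` for the order `m < m'` iff `m' = m + iΔ`, `i > 0`. -/
def deltaOf {d : ℕ} (Δ : Fin d → ℤ) (E : Set (Fin d → ℕ)) : Set (Fin d → ℕ) :=
  {p | Set.ncard {i : ℕ | 0 < i ∧ ∃ q : Fin d → ℕ, toInt q = toInt p + (i : ℤ) • Δ}
        < Set.ncard (E ∩ lineThrough Δ p)}

/-- `Δ ∈ ℤ^d` is admissible if some coordinate equals `1`, all the others are `≤ 0`,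
and at least one coordinate besides the `1` is nonzero. -/
def IsAdmissible {d : ℕ} (Δ : Fin d → ℤ) : Prop :=
  ∃ i, Δ i = 1 ∧ (∀ k, k ≠ i → Δ k ≤ 0) ∧ ∃ j, j ≠ i ∧ Δ j ≠ 0

/-! ### Specialization along one direction -/

lemma finite_lineThrough {d : ℕ} {Δ : Fin d → ℤ} (p : Fin d → ℕ) {i j : Fin d}
    (hi : Δ i = 1) (hj : Δ j < 0) : (lineThrough Δ p).Finite := by
  -- nonnegativity of the coordinates `i` and `j` bounds the parameter on both sides
  refine ((Set.finite_Icc (-(p i : ℤ)) (p j)).image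
    (fun t : ℤ => fun k => ((p k : ℤ) + t * Δ k).toNat)).subset ?_
  rintro q ⟨t, ht⟩
  have hq : ∀ k, (q k : ℤ) = p k + t * Δ k := fun k => by
    simpa [toInt] using congrFun ht k
  refine ⟨t, ⟨?_, ?_⟩, ?_⟩
  · have := hq i
    rw [hi] at this
    omega
  · have := hq j
    by_contra! h
    nlinarith [Int.natCast_nonneg (q j), Int.natCast_nonneg (p j)]
  · funext k
    simp [← hq k]

/-- If all points after `p` on its line belong to `S`, then one more point of `S` on the line,
at or before `p`, is enough for `p` to belong to the specialization of `S`. -/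
lemma mem_deltaOf {d : ℕ} {Δ : Fin d → ℤ} {S : Set (Fin d → ℕ)} {p : Fin d → ℕ} {a b : Fin d}
    (ha : Δ a = 1) (hb : Δ b < 0)
    (h : ∀ (i : ℕ) (q : Fin d → ℕ), 0 < i → toInt q = toInt p + (i : ℤ) • Δ → q ∈ S)
    {p' : Fin d → ℕ} {t : ℕ} (hp' : p' ∈ S) (ht : toInt p' = toInt p - (t : ℤ) • Δ) :
    p ∈ deltaOf Δ S := by
  have hfin : (S ∩ lineThrough Δ p).Finite :=
    (finite_lineThrough p ha hb).subset Set.inter_subset_right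
  have hmem : p' ∈ S ∩ lineThrough Δ p := ⟨hp', -(t : ℤ), by rw [ht, neg_smul, sub_eq_add_neg]⟩
  refine lt_of_le_of_lt ?_ (Set.ncard_sdiff_singleton_lt_of_mem hmem hfin)
  refine Set.ncard_le_ncard_of_injOn
    (fun i : ℕ => fun k => ((p k : ℤ) + (i : ℤ) * Δ k).toNat) ?_ ?_ (hfin.subset Set.sdiff_subset)
  · rintro i ⟨hi, q, hq⟩
    have hqe : (fun k => ((p k : ℤ) + (i : ℤ) * Δ k).toNat) = q := by
      funext k
      have : (q k : ℤ) = p k + i * Δ k := by simpa [toInt] using congrFun hq k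
      simp [← this]
    simp only [hqe]
    refine ⟨⟨h i q hi hq, i, hq⟩, ?_⟩
    rintro rfl
    have h1 : (q a : ℤ) = p a + i * Δ a := by simpa [toInt] using congrFun hq a
    have h2 : (q a : ℤ) = p a - t * Δ a := by simpa [toInt] using congrFun ht a
    rw [ha] at h1 h2
    omega
  · rintro i ⟨-, -⟩ i' ⟨-, -⟩ hii
    -- coordinate `a` grows by exactly one at each step
    have := congrFun hii a
    simp only [ha] at this
    omega

lemma subset_foldl_deltaOf : ∀ (d : ℕ) {n : ℕ} (Δ : Fin d → (Fin n → ℤ))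
    (G : ℕ → Set (Fin n → ℕ)) (S : Set (Fin n → ℕ)),
    (∀ (k : Fin d) (T : Set (Fin n → ℕ)), G k ⊆ T → G (k + 1) ⊆ deltaOf (Δ k) T) →
    G 0 ⊆ S → G d ⊆ (List.ofFn Δ).foldl (fun S v => deltaOf v S) S
  | 0, _, Δ, G, S, _, h0 => by simpa using h0
  | d + 1, _, Δ, G, S, hstep, h0 => by
    rw [List.ofFn_succ, List.foldl_cons]
    exact subset_foldl_deltaOf d (fun i => Δ i.succ) (fun m => G (m + 1)) _
      (fun k T hT => by simpa using hstep k.succ T (by simpa using hT))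
      (by simpa using hstep 0 S (by simpa using h0))

/-! ### Filling the diagonal with a good system of directions -/

/-- A system of directions `Δ k` with `Δ k k = 1` and other coordinates in `[-(s-1), 0]`, each of
coordinate sum `-1`, which are pairwise incongruent modulo `s`. -/
structure IsGoodSystem {d : ℕ} (s : ℕ) (Δ : Fin d → Fin d → ℤ) : Prop where
  diag : ∀ k, Δ k k = 1
  nonpos : ∀ k j, j ≠ k → Δ k j ≤ 0
  bound : ∀ k j, -(s : ℤ) < Δ k j
  sum : ∀ k, ∑ j, Δ k j = -1
  incong : ∀ k l, k ≠ l → ∃ j, ¬ (s : ℤ) ∣ Δ k j - Δ l j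

lemma IsGoodSystem.exists_neg {d s : ℕ} {Δ : Fin d → Fin d → ℤ} (h : IsGoodSystem s Δ)
    (k : Fin d) : ∃ j, Δ k j < 0 := by
  by_contra! hc
  have := Finset.sum_nonneg (s := Finset.univ) (fun j _ => hc j)
  have := h.sum k
  omega

lemma IsGoodSystem.isAdmissible {d s : ℕ} {Δ : Fin d → Fin d → ℤ} (h : IsGoodSystem s Δ)
    (k : Fin d) : IsAdmissible (Δ k) := by
  obtain ⟨j, hj⟩ := h.exists_neg k
  refine ⟨k, h.diag k, h.nonpos k, j, ?_, hj.ne⟩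
  rintro rfl
  have := h.diag j
  omega

/-- Points known to lie in the set obtained after specializing `s·R_μ` along the directions of index
`< m`: all points of degree `< s μ`; the points of degree `s μ` which are not divisible by `s` or
have a nonzero coordinate of index `< m`; and the points `s q - Δ l` with `|q| = μ`, `q l ≥ 1`
still needed for a direction `Δ l` with `l ≥ m`. -/
def invariantSet {d : ℕ} (s μ : ℕ) (Δ : Fin d → Fin d → ℤ) (m : ℕ) : Set (Fin d → ℕ) :=
  {p | ∑ j, p j < s * μ ∨
    (∑ j, p j = s * μ ∧ ((∃ j, ¬ s ∣ p j) ∨ ∃ j : Fin d, (j : ℕ) < m ∧ 0 < p j)) ∨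
    ∃ l : Fin d, m ≤ l ∧ ∃ q : Fin d → ℕ, ∑ j, q j = μ ∧ 1 ≤ q l ∧
      ∀ j, (p j : ℤ) = s * q j - Δ l j}

lemma invariantSet_zero_subset {d s μ : ℕ} (hs : 2 ≤ s) {Δ : Fin d → Fin d → ℤ}
    (h : IsGoodSystem s Δ) :
    invariantSet s μ Δ 0 ⊆ scaleSet (fun _ => s) (regStaircase d μ) := by
  intro p hp
  change ∑ i, p i / s < μ
  have hle : ∀ j ∈ Finset.univ, s * (p j / s) ≤ p j := fun j _ => Nat.mul_div_le _ _
  rcases hp with hp | ⟨hp, ⟨j, hj⟩ | ⟨j, hj, -⟩⟩ | ⟨l, -, q, hq, hql, hpq⟩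
  · have := Finset.sum_le_sum hle
    rw [← Finset.mul_sum] at this
    exact lt_of_mul_lt_mul_left (this.trans_lt hp) (Nat.zero_le s)
  · have : ∑ j, s * (p j / s) < ∑ j, p j :=
      Finset.sum_lt_sum hle ⟨j, Finset.mem_univ _, lt_of_le_of_ne (hle j (Finset.mem_univ _))
        (fun e => hj ⟨_, e.symm⟩)⟩
    rw [← Finset.mul_sum, hp] at this
    exact lt_of_mul_lt_mul_left this (Nat.zero_le s)
  · omega
  · rw [← hq]
    have hlt : p l / s < q l := by
      rw [Nat.div_lt_iff_lt_mul (by omega)]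
      have := hpq l
      rw [h.diag] at this
      zify
      linarith
    refine Finset.sum_lt_sum (fun j _ => ?_) ⟨l, Finset.mem_univ _, hlt⟩
    rcases eq_or_ne j l with rfl | hjl
    · exact hlt.le
    · rw [← Nat.lt_succ_iff, Nat.div_lt_iff_lt_mul (by omega)]
      have h1 := hpq j
      have h2 := h.bound l j
      zify
      linarith

lemma regStaircase_subset_invariantSet {d s μ : ℕ} (hs : 2 ≤ s) (hμ : 1 ≤ μ)
    (Δ : Fin d → Fin d → ℤ) :
    regStaircase d (s * μ + 1) ⊆ invariantSet s μ Δ d := by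
  intro p hp
  rcases Nat.lt_succ_iff_lt_or_eq.1 (show ∑ i, p i < s * μ + 1 from hp) with hp | hp
  · exact Or.inl hp
  · refine Or.inr (Or.inl ⟨hp, Or.inr ?_⟩)
    by_contra! hc
    have : ∑ i, p i = 0 := Finset.sum_eq_zero fun j _ => by have := hc j j.2; omega
    have : 0 < s * μ := by positivity
    omega

lemma invariantSet_succ_subset {d s μ : ℕ} {Δ : Fin d → Fin d → ℤ}
    (h : IsGoodSystem s Δ) (k : Fin d) (T : Set (Fin d → ℕ)) (hT : invariantSet s μ Δ k ⊆ T) :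
    invariantSet s μ Δ (k + 1) ⊆ deltaOf (Δ k) T := by
  intro p hp
  obtain ⟨b, hb⟩ := h.exists_neg k
  have hcoord : ∀ (i : ℕ) (q : Fin d → ℕ), toInt q = toInt p + (i : ℤ) • Δ k →
      ∀ j, (q j : ℤ) = p j + i * Δ k j := fun i q hq j => by
    simpa [toInt] using congrFun hq j
  have hdeg : ∀ (i : ℕ) (q : Fin d → ℕ), toInt q = toInt p + (i : ℤ) • Δ k →
      ∑ j, q j + i = ∑ j, p j := by
    intro i q hq
    have h1 : (∑ j, (q j : ℤ)) = ∑ j, (p j + i * Δ k j) :=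
      Finset.sum_congr rfl fun j _ => hcoord i q hq j
    rw [Finset.sum_add_distrib, ← Finset.mul_sum, h.sum] at h1
    zify
    linarith
  have hlow : ∑ j, p j ≤ s * μ → ∀ (i : ℕ) (q : Fin d → ℕ), 0 < i →
      toInt q = toInt p + (i : ℤ) • Δ k → q ∈ T := by
    intro hle i q hi hq
    have := hdeg i q hq
    exact hT (Or.inl (by omega))
  have hself : toInt p = toInt p - ((0 : ℕ) : ℤ) • Δ k := by simp
  rcases hp with hp | ⟨hp, hp'⟩ | ⟨l, hkl, q, hq, hql, hpq⟩
  · exact mem_deltaOf (h.diag k) hb (hlow hp.le) (hT (Or.inl hp)) hself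
  · by_cases hmem : (∃ j, ¬ s ∣ p j) ∨ ∃ j : Fin d, (j : ℕ) < k ∧ 0 < p j
    · exact mem_deltaOf (h.diag k) hb (hlow hp.le) (hT (Or.inr (Or.inl ⟨hp, hmem⟩))) hself
    · push Not at hmem
      obtain ⟨hdvd, hzero⟩ := hmem
      have hk : 0 < p k := by
        rcases hp' with ⟨j, hj⟩ | ⟨j, hj, hj0⟩
        · exact absurd (hdvd j) hj
        · rcases Nat.lt_succ_iff_lt_or_eq.1 hj with hj | hj
          · have := hzero j hj
            omega
          · rwa [← Fin.ext hj]
      choose q hq using hdvd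
      have hqk : 1 ≤ q k := by
        rw [hq k] at hk
        exact Nat.pos_of_mul_pos_left hk
      have hs : 0 < s := by
        rw [hq k] at hk
        exact Nat.pos_of_mul_pos_right hk
      have hqs : ∑ j, q j = μ := by
        have : s * ∑ j, q j = s * μ := by rw [← hp, Finset.mul_sum]; simp [hq]
        exact Nat.eq_of_mul_eq_mul_left hs this
      -- the point `p - Δ k = s q - Δ k`, which lies in `ℕ^d` because `q k ≥ 1`
      have hpnat : ∀ j, ((((p j : ℤ) - Δ k j).toNat : ℕ) : ℤ) = p j - Δ k j := by
        intro j
        apply Int.toNat_of_nonneg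
        rcases eq_or_ne j k with rfl | hjk
        · rw [h.diag]
          omega
        · have := h.nonpos k j hjk
          omega
      refine mem_deltaOf (t := 1) (p' := fun j => ((p j : ℤ) - Δ k j).toNat) (h.diag k) hb
        (hlow hp.le) (hT (Or.inr (Or.inr ⟨k, le_rfl, q, hqs, hqk, fun j => ?_⟩))) ?_
      · rw [hpnat, hq j]
        push_cast
        ring
      · funext j
        simpa [toInt] using hpnat j
  · have hpT : p ∈ T := hT (Or.inr (Or.inr ⟨l, by omega, q, hq, hql, hpq⟩))
    have hpd : ∑ j, p j = s * μ + 1 := by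
      have h1 : (∑ j, (p j : ℤ)) = ∑ j, (s * q j - Δ l j) :=
        Finset.sum_congr rfl fun j _ => hpq j
      rw [Finset.sum_sub_distrib, ← Finset.mul_sum, h.sum] at h1
      rw [← hq]
      zify
      linarith
    refine mem_deltaOf (h.diag k) hb (fun i r hi hr => hT ?_) hpT hself
    have hd := hdeg i r hr
    rcases Nat.lt_or_ge 1 i with hi1 | hi1
    · exact Or.inl (by omega)
    · obtain rfl : i = 1 := by omega
      -- the first point after `s q - Δ l` is `s q + Δ k - Δ l`, which `s` does not divide
      refine Or.inr (Or.inl ⟨by omega, Or.inl ?_⟩)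
      obtain ⟨j, hj⟩ := h.incong k l (by rintro rfl; omega)
      refine ⟨j, fun hdv => hj ?_⟩
      have h1 := hcoord 1 r hr j
      have h2 : Δ k j - Δ l j = r j - s * q j := by
        rw [h1, hpq j]
        push_cast
        ring
      rw [h2]
      exact dvd_sub (Int.natCast_dvd_natCast.2 hdv) (Dvd.intro _ rfl)

/-! ### Existence of good systems -/

lemma not_natCast_dvd_of_lt {s : ℕ} {x : ℤ} (hx : x ≠ 0) (hlt : |x| < s) : ¬ (s : ℤ) ∣ x :=
  fun hd => hx (Int.eq_zero_of_abs_lt_dvd hd hlt)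

lemma isGoodSystem_two {s : ℕ} (hs : 4 ≤ s) :
    IsGoodSystem s (fun k j : Fin 2 => if j = k then 1 else -2) where
  diag k := by simp
  nonpos k j hj := by simp [hj]
  bound k j := by split_ifs <;> omega
  sum k := by fin_cases k <;> simp [Fin.sum_univ_two]
  incong k l hkl := by
    refine ⟨k, not_natCast_dvd_of_lt ?_ ?_⟩ <;> simp [hkl]
    omega

lemma isGoodSystem_three {s : ℕ} (hs : 3 ≤ s) :
    IsGoodSystem s (fun k j : Fin 3 => if j = k then 1 else -1) where
  diag k := by simp
  nonpos k j hj := by simp [hj]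
  bound k j := by split_ifs <;> omega
  sum k := by fin_cases k <;> simp [Fin.sum_univ_three]
  incong k l hkl := by
    refine ⟨k, not_natCast_dvd_of_lt ?_ ?_⟩ <;> simp [hkl]
    omega

open Fin.CommRing in
/-- For `d ≥ 4` the cyclic intervals `{k, k+1, k+2}` are pairwise distinct, so any two of these
directions differ by exactly one in absolute value at some coordinate, even when `s = 2`. -/
lemma isGoodSystem_cyclic {s : ℕ} (hs : 2 ≤ s) (n : ℕ) :
    IsGoodSystem s (fun k j : Fin (n + 4) =>
      if j = k then 1 else if j = k + 1 ∨ j = k + 2 then -1 else 0) := by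
  have e1 : (1 : Fin (n + 4)) ≠ 0 := by simp
  have e2 : (2 : Fin (n + 4)) ≠ 0 := by
    simp [Fin.ext_iff, Nat.mod_eq_of_lt (show 2 < n + 4 by omega)]
  have e3 : (3 : Fin (n + 4)) ≠ 0 := by
    simp [Fin.ext_iff, Nat.mod_eq_of_lt (show 3 < n + 4 by omega)]
  have e12 : (1 : Fin (n + 4)) ≠ 2 := by
    intro e
    apply e1
    linear_combination -e
  refine ⟨fun k => by simp, fun k j hj => ?_, fun k j => ?_, fun k => ?_, fun k l hkl => ?_⟩
  · simp only [hj, if_false]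
    split_ifs <;> omega
  · split_ifs <;> omega
  · have : ∀ j : Fin (n + 4),
        (if j = k then (1 : ℤ) else if j = k + 1 ∨ j = k + 2 then -1 else 0) =
        (if j = k then 1 else 0) - (if j = k + 1 then 1 else 0) - (if j = k + 2 then 1 else 0) := by
      intro j
      by_cases h0 : j = k
      · subst h0
        simp [e1, e2]
      · by_cases h1 : j = k + 1
        · subst h1
          simp [e1, e12]
        · by_cases h2 : j = k + 2 <;> simp [h0, h1, h2, e2, e12.symm]
    simp only [this, Finset.sum_sub_distrib, Finset.sum_ite_eq', Finset.mem_univ, if_true]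
    norm_num
  · have key : ∀ x : ℤ, x = 1 ∨ x = -1 → ¬ (s : ℤ) ∣ x := by
      rintro x (rfl | rfl) <;> exact not_natCast_dvd_of_lt (by norm_num) (by norm_num; omega)
    by_cases h1 : l = k + 1 ∨ l = k + 2
    · by_cases h2 : k = l + 1 ∨ k = l + 2
      · -- each interval contains the other's start: this forces `d = 4` and `l = k + 2`
        obtain ⟨hl, hk⟩ : l = k + 2 ∧ k = l + 2 := by
          rcases h1 with h1 | h1 <;> rcases h2 with h2 | h2
          · exact absurd (by linear_combination -h1 - h2) e2
          · exact absurd (by linear_combination -h1 - h2) e3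
          · exact absurd (by linear_combination -h1 - h2) e3
          · exact ⟨h1, h2⟩
        have a1 : k + 1 ≠ l := fun e => e12 (by linear_combination e + hl)
        have a2 : k + 1 ≠ l + 1 := fun e => hkl (by linear_combination e)
        have a3 : k + 1 ≠ l + 2 := fun e => e1 (by linear_combination e - hk)
        refine ⟨k + 1, key _ (Or.inr ?_)⟩
        rw [if_neg a1, if_neg (not_or.2 ⟨a2, a3⟩)]
        simp [e1]
      · exact ⟨k, key _ (Or.inl (by simp [hkl, h2]))⟩
    · exact ⟨l, key _ (Or.inr (by simp [hkl.symm, h1]))⟩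

lemma exists_isGoodSystem (d s : ℕ) (hd : 2 ≤ d) (hs : 2 ≤ s)
    (hne : (s, d) ≠ (2, 2) ∧ (s, d) ≠ (2, 3) ∧ (s, d) ≠ (3, 2)) :
    ∃ Δ : Fin d → Fin d → ℤ, IsGoodSystem s Δ := by
  simp only [ne_eq, Prod.mk.injEq] at hne
  match d, hd with
  | 2, _ => exact ⟨_, isGoodSystem_two (by omega)⟩
  | 3, _ => exact ⟨_, isGoodSystem_three (by omega)⟩
  | n + 4, _ => exact ⟨_, isGoodSystem_cyclic hs n⟩

/-- Key lemma (lemma 3.9 of the paper): for `d ≥ 2`, `s ≥ 2` with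
`(s,d) ∉ {(2,2),(2,3),(3,2)}`, there exist admissible directions `Δ₁, …, Δ_d ∈ ℤ^d`
such that for every `μ ≥ 1` one has `Δ_d(Δ_{d-1}(⋯(Δ₁(s·R_μ))⋯)) ⊇ R_{sμ+1}`. -/
theorem key_lemma_admissible_directions (d s : ℕ) (hd : 2 ≤ d) (hs : 2 ≤ s)
    (hne : (s, d) ≠ (2, 2) ∧ (s, d) ≠ (2, 3) ∧ (s, d) ≠ (3, 2)) :
    ∃ Δ : Fin d → (Fin d → ℤ),
      (∀ i, IsAdmissible (Δ i)) ∧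
      ∀ μ : ℕ, 1 ≤ μ →
        regStaircase d (s * μ + 1) ⊆
          (List.ofFn Δ).foldl (fun S v => deltaOf v S)
            (scaleSet (fun _ => s) (regStaircase d μ)) := by
  obtain ⟨Δ, h⟩ := exists_isGoodSystem d s hd hs hne
  refine ⟨Δ, h.isAdmissible, fun μ hμ => ?_⟩
  exact (regStaircase_subset_invariantSet hs hμ Δ).trans
    (subset_foldl_deltaOf d Δ (invariantSet s μ Δ) _ (invariantSet_succ_subset h)
      (invariantSet_zero_subset hs h))
end

section
/- Let Δ = (δ_1,…,δ_d) ∈ ℤ^d be admissible (there is an index i with δ_i = 1, δ_k ≤ 0 for all k ≠ i, and δ_j ≠ 0 for some j ≠ i), and let E ⊆ ℕ^d be a finite staircase. Then Δ(E) is a staircase (a downward closed subset of ℕ^d). -/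
/-!
Let `i` be the coordinate with `Δ i = 1`. A lattice point on a line `L` of direction `Δ` is
determined by its `i`-th coordinate `s`, and the points of `L` below `p` (those with `s ≤ p i`) are
all in `ℕ^d`, because moving backwards only increases the other coordinates. Hence `L_p ∩ ℕ^d` has
`p i + 1 + N` points, where `N` counts the points strictly after `p`, and `N < #(E ∩ L_p)` says
exactly that at most `p i` points of `L_p ∩ ℕ^d` lie outside `E` (`mem_deltaOf_iff`).

Let `A p ⊆ ℕ` (`gapSet`) be the set of `i`-th coordinates of the points of `L_p ∩ ℕ^d` outside `E`.
For `s ∈ A p` and `0 ≤ j ≤ y i`, the point of `L_{p+y}` with `i`-th coordinate `s + j` is the point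
of `L_p` with `i`-th coordinate `s` plus `y - (y i - j)Δ`, whose coordinates are nonnegative.
As the complement of `E` is stable under addition, `A p + {0, …, y i} ⊆ A (p + y)`. If `p ∉ Δ(E)`,
then `#A p > p i`, so `A p` is nonempty and the Cauchy–Davenport inequality in `ℕ` gives
`#A (p + y) ≥ #A p + y i > (p + y) i`, that is `p + y ∉ Δ(E)`.
-/

/-- The `i`-th coordinates of the points of `L_p ∩ ℕ^d` lying outside `E`. When `Δ i = 1`, the point
of `L_p` with `i`-th coordinate `s` is `p + (s - p i)Δ`. -/
def gapSet {d : ℕ} (Δ : Fin d → ℤ) (E : Set (Fin d → ℕ)) (i : Fin d) (p : Fin d → ℕ) : Set ℕ :=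
  {s | ∃ q : Fin d → ℕ, q ∉ E ∧ toInt q = toInt p + ((s : ℤ) - p i) • Δ}

lemma toInt_injective {d : ℕ} : Function.Injective (toInt (d := d)) := by
  intro p q h
  funext k
  have := congrFun h k
  simpa [toInt] using this

lemma exists_toInt_eq {d : ℕ} (v : Fin d → ℤ) (hv : ∀ k, 0 ≤ v k) :
    ∃ q : Fin d → ℕ, toInt q = v :=
  ⟨fun k => (v k).toNat, funext fun k => Int.toNat_of_nonneg (hv k)⟩

/-- A strictly decreasing coordinate `j` bounds how far a line can be followed inside `ℕ^d`. -/
lemma finite_forward {d : ℕ} {Δ : Fin d → ℤ} {j : Fin d} (hj : Δ j < 0) (p : Fin d → ℕ) :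
    {n : ℕ | 0 < n ∧ ∃ q : Fin d → ℕ, toInt q = toInt p + (n : ℤ) • Δ}.Finite := by
  refine (Set.finite_Iic (p j)).subset ?_
  rintro n ⟨-, q, hq⟩
  have h := congrFun hq j
  simp only [toInt, Pi.add_apply, Pi.smul_apply, smul_eq_mul] at h
  have : (n : ℤ) ≤ p j := by nlinarith
  exact_mod_cast this

/-- The `i`-th coordinates of the points of `L_p ∩ ℕ^d` are `0, …, p i`, followed by those of the
points strictly after `p`. -/
lemma lineCoords_eq {d : ℕ} {Δ : Fin d → ℤ} {i : Fin d} (hi : Δ i = 1)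
    (hneg : ∀ k, k ≠ i → Δ k ≤ 0) (p : Fin d → ℕ) :
    {s : ℕ | ∃ q : Fin d → ℕ, toInt q = toInt p + ((s : ℤ) - p i) • Δ} =
      ↑(Finset.range (p i + 1)) ∪ (fun n => p i + n) ''
        {n : ℕ | 0 < n ∧ ∃ q : Fin d → ℕ, toInt q = toInt p + (n : ℤ) • Δ} := by
  ext s
  simp only [Set.mem_ofPred_eq, Set.mem_union, Finset.coe_range, Set.mem_Iio, Set.mem_image]
  constructor
  · rintro ⟨q, hq⟩
    by_cases hs : s < p i + 1
    · exact Or.inl hs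
    · refine Or.inr ⟨s - p i, ⟨by omega, q, ?_⟩, by omega⟩
      rw [hq, Nat.cast_sub (by omega)]
  · rintro (hs | ⟨n, ⟨-, q, hq⟩, rfl⟩)
    · apply exists_toInt_eq
      intro k
      simp only [toInt, Pi.add_apply, Pi.smul_apply, smul_eq_mul]
      by_cases hk : k = i
      · subst hk
        rw [hi]
        omega
      · have h1 := hneg k hk
        have h2 : (s : ℤ) - p i ≤ 0 := by omega
        have := mul_nonneg_of_nonpos_of_nonpos h2 h1
        positivity
    · exact ⟨q, by rw [hq]; push_cast; simp⟩

/-- The points of `E` on `L_p` are counted by their `i`-th coordinates. -/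
lemma ncard_inter_lineThrough {d : ℕ} {Δ : Fin d → ℤ} {i : Fin d} (hi : Δ i = 1)
    (E : Set (Fin d → ℕ)) (p : Fin d → ℕ) :
    {s : ℕ | ∃ q ∈ E, toInt q = toInt p + ((s : ℤ) - p i) • Δ}.ncard =
      (E ∩ lineThrough Δ p).ncard := by
  have key : ∀ (q : Fin d → ℕ) (t : ℤ), toInt q = toInt p + t • Δ → t = (q i : ℤ) - p i := by
    intro q t h
    have := congrFun h i
    simp only [toInt, Pi.add_apply, Pi.smul_apply, smul_eq_mul, hi] at this
    omega
  have himg : {s : ℕ | ∃ q ∈ E, toInt q = toInt p + ((s : ℤ) - p i) • Δ} =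
      (fun q : Fin d → ℕ => q i) '' (E ∩ lineThrough Δ p) := by
    ext s
    constructor
    · rintro ⟨q, hqE, hq⟩
      refine ⟨q, ⟨hqE, _, hq⟩, ?_⟩
      have := key q _ hq
      change q i = s
      omega
    · rintro ⟨q, ⟨hqE, t, hq⟩, rfl⟩
      refine ⟨q, hqE, ?_⟩
      rw [← key q t hq]
      exact hq
  rw [himg]
  apply Set.InjOn.ncard_image
  rintro q ⟨-, t, hq⟩ q' ⟨-, t', hq'⟩ (h : q i = q' i)
  have h1 := key q t hq
  have h2 := key q' t' hq'
  have h3 : t = t' := by omega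
  exact toInt_injective (by rw [hq, hq', h3])

lemma finite_lineCoords {d : ℕ} {Δ : Fin d → ℤ} {i j : Fin d} (hi : Δ i = 1)
    (hneg : ∀ k, k ≠ i → Δ k ≤ 0) (hj : Δ j < 0) (p : Fin d → ℕ) :
    {s : ℕ | ∃ q : Fin d → ℕ, toInt q = toInt p + ((s : ℤ) - p i) • Δ}.Finite := by
  rw [lineCoords_eq hi hneg]
  exact (Finset.finite_toSet _).union ((finite_forward hj p).image _)

lemma finite_gapSet {d : ℕ} {Δ : Fin d → ℤ} {i j : Fin d} (hi : Δ i = 1)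
    (hneg : ∀ k, k ≠ i → Δ k ≤ 0) (hj : Δ j < 0) (E : Set (Fin d → ℕ)) (p : Fin d → ℕ) :
    (gapSet Δ E i p).Finite :=
  (finite_lineCoords hi hneg hj p).subset fun _ ⟨q, _, hq⟩ => ⟨q, hq⟩

/-- Membership in `Δ(E)` in terms of the complement of `E`: both sides of the defining inequality
are compared with the total number of points of `L_p ∩ ℕ^d`. -/
lemma mem_deltaOf_iff {d : ℕ} {Δ : Fin d → ℤ} {i j : Fin d} (hi : Δ i = 1)
    (hneg : ∀ k, k ≠ i → Δ k ≤ 0) (hj : Δ j < 0) (E : Set (Fin d → ℕ)) (p : Fin d → ℕ) :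
    p ∈ deltaOf Δ E ↔ (gapSet Δ E i p).ncard ≤ p i := by
  have hT := finite_lineCoords hi hneg hj p
  have hsplit : {s : ℕ | ∃ q : Fin d → ℕ, toInt q = toInt p + ((s : ℤ) - p i) • Δ} =
      gapSet Δ E i p ∪ {s : ℕ | ∃ q ∈ E, toInt q = toInt p + ((s : ℤ) - p i) • Δ} := by
    ext s
    constructor
    · rintro ⟨q, hq⟩
      by_cases hqE : q ∈ E
      · exact Or.inr ⟨q, hqE, hq⟩
      · exact Or.inl ⟨q, hqE, hq⟩
    · rintro (⟨q, -, hq⟩ | ⟨q, -, hq⟩) <;> exact ⟨q, hq⟩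
  have hdisj : Disjoint (gapSet Δ E i p)
      {s : ℕ | ∃ q ∈ E, toInt q = toInt p + ((s : ℤ) - p i) • Δ} := by
    rw [Set.disjoint_left]
    rintro s ⟨q, hqE, hq⟩ ⟨q', hqE', hq'⟩
    exact hqE (toInt_injective (hq.trans hq'.symm) ▸ hqE')
  have hc1 := Set.ncard_union_eq hdisj (finite_gapSet hi hneg hj E p)
    (hT.subset fun _ ⟨q, _, hq⟩ => ⟨q, hq⟩)
  have hdisj2 : Disjoint (↑(Finset.range (p i + 1)) : Set ℕ) ((fun n => p i + n) ''
      {n : ℕ | 0 < n ∧ ∃ q : Fin d → ℕ, toInt q = toInt p + (n : ℤ) • Δ}) := by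
    rw [Set.disjoint_left]
    rintro s hs ⟨n, ⟨hn, -⟩, rfl⟩
    simp only [Finset.coe_range, Set.mem_Iio] at hs
    omega
  have hc2 := Set.ncard_union_eq hdisj2 (Finset.finite_toSet _) ((finite_forward hj p).image _)
  rw [Set.ncard_coe_finset, Finset.card_range,
    Set.ncard_image_of_injective _ (add_right_injective (p i)), ← lineCoords_eq hi hneg] at hc2
  rw [← hsplit, ncard_inter_lineThrough hi, hc2] at hc1
  change Set.ncard _ < Set.ncard (E ∩ lineThrough Δ p) ↔ _
  omega

/-- Each gap `s` on `L_p` produces the gaps `s, …, s + y i` on `L_{p+y}`. -/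
lemma add_mem_gapSet {d : ℕ} {Δ : Fin d → ℤ} {i : Fin d} (hi : Δ i = 1)
    (hneg : ∀ k, k ≠ i → Δ k ≤ 0) {E : Set (Fin d → ℕ)} (hE : IsStaircase E)
    {p y : Fin d → ℕ} {s t : ℕ} (hs : s ∈ gapSet Δ E i p) (ht : t ≤ y i) :
    s + t ∈ gapSet Δ E i (p + y) := by
  obtain ⟨q, hqE, hq⟩ := hs
  obtain ⟨z, hz⟩ := exists_toInt_eq (toInt y + ((t : ℤ) - y i) • Δ) (by
    intro k
    simp only [toInt, Pi.add_apply, Pi.smul_apply, smul_eq_mul]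
    by_cases hk : k = i
    · subst hk
      rw [hi]
      omega
    · have h1 := hneg k hk
      have h2 : (t : ℤ) - y i ≤ 0 := by omega
      have := mul_nonneg_of_nonpos_of_nonpos h2 h1
      positivity)
  refine ⟨q + z, hE q hqE z, ?_⟩
  have hadd : ∀ a b : Fin d → ℕ, toInt (a + b) = toInt a + toInt b := by
    intro a b
    funext k
    simp [toInt]
  rw [hadd, hadd, hq, hz]
  simp only [Pi.add_apply]
  push_cast
  module

/-- For an admissible direction `Δ ∈ ℤ^d` and a finite staircase `E ⊆ ℕ^d`,
the specialization `Δ(E)` is again a staircase. -/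
theorem deltaOf_isStaircase (d : ℕ) (Δ : Fin d → ℤ) (hΔ : IsAdmissible Δ)
    (E : Set (Fin d → ℕ)) (hfin : E.Finite) (hE : IsStaircase E) :
    IsStaircase (deltaOf Δ E) := by
  obtain ⟨i, hi, hneg, j, hji, hj0⟩ := hΔ
  have hj : Δ j < 0 := lt_of_le_of_ne (hneg j hji) hj0
  intro p hp y
  rw [mem_deltaOf_iff hi hneg hj, not_le] at hp ⊢
  have hA := finite_gapSet hi hneg hj E p
  have hA' := finite_gapSet hi hneg hj E (p + y)
  rw [Set.ncard_eq_toFinset_card _ hA] at hp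
  rw [Set.ncard_eq_toFinset_card _ hA']
  have hne : hA.toFinset.Nonempty := Finset.card_pos.mp (by omega)
  have hcd := cauchy_davenport_add_of_linearOrder_isCancelAdd hne
    (t := Finset.range (y i + 1)) (Finset.nonempty_range_iff.mpr (Nat.succ_ne_zero (y i)))
  open scoped Pointwise in
  have hsub : hA.toFinset + Finset.range (y i + 1) ⊆ hA'.toFinset := by
    intro u hu
    obtain ⟨s, hs, t, ht, rfl⟩ := Finset.mem_add.mp hu
    rw [Set.Finite.mem_toFinset] at hs ⊢
    exact add_mem_gapSet hi hneg hE hs (by rw [Finset.mem_range] at ht; omega)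
  have hle := Finset.card_le_card hsub
  rw [Finset.card_range] at hcd
  change p i + y i < _
  omega
end

section
/- Let Δ ∈ ℤ^d be admissible, let μ ≥ 1, let m ∈ R_μ, let P ⊆ ℕ^d be a finite subset with P ∩ R_μ = ∅, and set E = (R_μ ∪ P) ∖ {m}. If there exists an integer i ∈ ℤ such that m + iΔ ∈ P, then Δ(E) ⊇ R_μ. -/
lemma IsAdmissible.sum_nonpos {d : ℕ} {Δ : Fin d → ℤ} (hΔ : IsAdmissible Δ) :
    ∑ k, Δ k ≤ 0 := by
  obtain ⟨i, hi, hneg, j, hji, hj⟩ := hΔ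
  have h : ∑ k, Δ k ≤ ∑ k, ((if k = i then (1 : ℤ) else 0) - if k = j then 1 else 0) := by
    refine Finset.sum_le_sum fun k _ => ?_
    by_cases hk : k = i
    · subst hk
      simp [hi, hji.symm]
    · have := hneg k hk
      by_cases hkj : k = j
      · subst hkj
        simp only [hk, if_true, if_false]
        omega
      · simpa [hk, hkj] using this
  simpa [Finset.sum_sub_distrib] using h

lemma regStaircase_finite (d μ : ℕ) : (regStaircase d μ).Finite := by
  refine (Set.finite_Iic (fun _ : Fin d => μ)).subset fun x hx k => ?_
  have h1 : x k ≤ ∑ i, x i := Finset.single_le_sum (fun _ _ => Nat.zero_le _) (Finset.mem_univ k)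
  have h2 : ∑ i, x i < μ := hx
  exact h1.trans h2.le

/-- The point `p + iΔ`; coordinates that would be negative are replaced by `0`, so that this is
the intended point exactly when `p + iΔ ∈ ℕ^d`. -/
def stepPoint {d : ℕ} (Δ : Fin d → ℤ) (p : Fin d → ℕ) (i : ℕ) : Fin d → ℕ :=
  fun k => (toInt p k + i * Δ k).toNat

lemma toInt_stepPoint {d : ℕ} {Δ : Fin d → ℤ} {p : Fin d → ℕ} {i : ℕ}
    (h : ∃ q : Fin d → ℕ, toInt q = toInt p + (i : ℤ) • Δ) :
    toInt (stepPoint Δ p i) = toInt p + (i : ℤ) • Δ := by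
  obtain ⟨q, hq⟩ := h
  funext k
  have := congrFun hq k
  simp only [toInt, stepPoint, Pi.add_apply, Pi.smul_apply, smul_eq_mul] at this ⊢
  omega

lemma step_mem_regStaircase {d μ : ℕ} {Δ : Fin d → ℤ} (hΔ : IsAdmissible Δ)
    {p x : Fin d → ℕ} (hp : p ∈ regStaircase d μ) {i : ℕ}
    (hx : toInt x = toInt p + (i : ℤ) • Δ) : x ∈ regStaircase d μ := by
  have hsum : ∑ k, (x k : ℤ) = ∑ k, (p k : ℤ) + i * ∑ k, Δ k := by
    rw [Finset.mul_sum, ← Finset.sum_add_distrib]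
    exact Finset.sum_congr rfl fun k _ => congrFun hx k
  have hle : (i : ℤ) * ∑ k, Δ k ≤ 0 :=
    mul_nonpos_of_nonneg_of_nonpos (Int.natCast_nonneg i) hΔ.sum_nonpos
  have hp' : ∑ k, p k < μ := hp
  change ∑ k, x k < μ
  zify at hp' ⊢
  omega

/-- Filling the last hole (lemma 3.7 of the paper): let `m ∈ R_μ`, let `P ⊆ ℕ^d` be finite
with `P ∩ R_μ = ∅` and set `E = (R_μ ∪ P) ∖ {m}`.  If `m + iΔ ∈ P` for some `i ∈ ℤ`,
then `Δ(E) ⊇ R_μ`. -/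
theorem deltaOf_fills_hole (d μ : ℕ) (hμ : 1 ≤ μ) (Δ : Fin d → ℤ) (hΔ : IsAdmissible Δ)
    (m : Fin d → ℕ) (hm : m ∈ regStaircase d μ)
    (P : Set (Fin d → ℕ)) (hPfin : P.Finite) (hP : P ∩ regStaircase d μ = ∅)
    (hhit : ∃ (i : ℤ) (q : Fin d → ℕ), q ∈ P ∧ toInt q = toInt m + i • Δ) :
    regStaircase d μ ⊆ deltaOf Δ ((regStaircase d μ ∪ P) \ {m}) := by
  classical
  obtain ⟨t, q, hqP, hq⟩ := hhit
  have hqR : q ∉ regStaircase d μ := fun h => by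
    have : q ∈ P ∩ regStaircase d μ := ⟨hqP, h⟩
    simp [hP] at this
  have hqm : q ≠ m := fun h => hqR (h ▸ hm)
  intro p hp
  set S : Set ℕ := {i | ∃ x : Fin d → ℕ, toInt x = toInt p + (i : ℤ) • Δ} with hS
  set T := ((regStaircase d μ ∪ P) \ {m}) ∩ lineThrough Δ p with hT
  have hTfin : T.Finite :=
    (((regStaircase_finite d μ).union hPfin).subset Set.sdiff_subset).subset Set.inter_subset_left
  have hstepR : ∀ i ∈ S, stepPoint Δ p i ∈ regStaircase d μ := fun i hi =>
    step_mem_regStaircase hΔ hp (toInt_stepPoint hi)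
  have hstepInj : Set.InjOn (stepPoint Δ p) S := by
    intro i hi j hj hij
    obtain ⟨k, hk, -⟩ := hΔ
    have h := toInt_stepPoint hi
    rw [hij, toInt_stepPoint hj] at h
    have := congrFun h k
    simp only [Pi.add_apply, Pi.smul_apply, smul_eq_mul, hk] at this
    omega
  -- The hole `m`, if it is met, is replaced by the point `q` of `P`.
  let f : ℕ → Fin d → ℕ := fun i => if stepPoint Δ p i = m then q else stepPoint Δ p i
  have hfT : ∀ i ∈ S, f i ∈ T := by
    intro i hi
    have hline := toInt_stepPoint hi
    by_cases him : stepPoint Δ p i = m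
    · simp only [f, if_pos him]
      refine ⟨⟨Or.inr hqP, hqm⟩, i + t, ?_⟩
      rw [hq, ← him, hline, add_smul, add_assoc]
    · simp only [f, if_neg him]
      exact ⟨⟨Or.inl (hstepR i hi), him⟩, i, hline⟩
  have hfInj : Set.InjOn f S := by
    intro i hi j hj hij
    have hi' := hstepR i hi
    have hj' := hstepR j hj
    apply hstepInj hi hj
    simp only [f] at hij
    split_ifs at hij with h1 h2 h2
    · rw [h1, h2]
    · exact absurd (hij ▸ hj') hqR
    · exact absurd (hij ▸ hi') hqR
    · exact hij
  have hSfin : S.Finite := Set.Finite.of_injOn hfT hfInj hTfin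
  -- The index `0`, i.e. `p` itself, is what makes the inequality strict.
  have h0 : (0 : ℕ) ∈ S := ⟨p, by simp⟩
  refine lt_of_lt_of_le (Set.ncard_lt_ncard ?_ hSfin) (Set.ncard_le_ncard_of_injOn f hfT hfInj hTfin)
  exact ⟨fun i hi => hi.2, fun h => lt_irrefl 0 (h h0).1⟩
end

section
/- Let E ⊆ ℕ^d be a finite staircase and let a_1,…,a_d ≥ 1 be integers. Define F = {(m_1,…,m_d) ∈ ℕ^d : (⌊m_1/a_1⌋,…,⌊m_d/a_d⌋) ∈ E} and G = {(a_1(m_1+1)−1, …, a_d(m_d+1)−1) : (m_1,…,m_d) ∈ E}. Then F is the smallest staircase containing G: F is a staircase, G ⊆ F, and every staircase containing G contains F. (Hence F coincides with the scaled staircase (a_1,…,a_d)·E.) -/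
theorem IsStaircase.mem_of_le {d : ℕ} {E : Set (Fin d → ℕ)} (hE : IsStaircase E)
    {x y : Fin d → ℕ} (hxy : x ≤ y) (hy : y ∈ E) : x ∈ E := by
  by_contra hx
  obtain ⟨z, rfl⟩ := exists_add_of_le hxy
  exact hE x hx z hy

/-- The scaled staircase `(a₁,…,a_d)·E = {m : (⌊m₁/a₁⌋,…,⌊m_d/a_d⌋) ∈ E}` is the smallest
staircase containing `G = {(a₁(m₁+1)−1, …, a_d(m_d+1)−1) : m ∈ E}`. -/
theorem scaleSet_smallest_staircase (d : ℕ) (E : Set (Fin d → ℕ))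
    (hE : IsStaircase E) (hfin : E.Finite) (a : Fin d → ℕ) (ha : ∀ i, 1 ≤ a i) :
    IsStaircase (scaleSet a E) ∧
    ((fun m : Fin d → ℕ => fun i => a i * (m i + 1) - 1) '' E ⊆ scaleSet a E) ∧
    ∀ S : Set (Fin d → ℕ), IsStaircase S →
      (fun m : Fin d → ℕ => fun i => a i * (m i + 1) - 1) '' E ⊆ S →
      scaleSet a E ⊆ S := by
  refine ⟨fun x hx y hxy => hx ?_, ?_, ?_⟩
  · exact hE.mem_of_le (fun i => Nat.div_le_div_right (Nat.le_add_right (x i) (y i))) hxy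
  · rintro _ ⟨m, hm, rfl⟩
    have h : (fun i => (a i * (m i + 1) - 1) / a i) = m := by
      funext i
      have hi := ha i
      rw [Nat.div_eq_iff (by omega), mul_add, mul_one, mul_comm]
      omega
    change (fun i => (a i * (m i + 1) - 1) / a i) ∈ E
    rwa [h]
  · intro S hS hG x hx
    refine hS.mem_of_le (fun i => ?_) (hG ⟨_, hx, rfl⟩)
    exact Nat.le_sub_one_of_lt (Nat.lt_mul_div_succ (x i) (ha i))
end

section
/- Let μ ≥ 1. In ℕ^4, set S_m = {α ∈ ℕ^4 : α_1+α_2+α_3+α_4 = m} and, for 0 ≤ i ≤ 4, let S_m^i be the set of α ∈ S_m having exactly i odd coordinates. Then 2·R_μ = {α ∈ ℕ^4 : ⌊α_1/2⌋+⌊α_2/2⌋+⌊α_3/2⌋+⌊α_4/2⌋ < μ} is the disjoint union R_{2μ} ⊔ (S_{2μ} ∖ S_{2μ}^0) ⊔ S_{2μ+1}^3 ⊔ S_{2μ+2}^4. -/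
/-- The slice `S_m = {α ∈ ℕ^4 : α₁ + α₂ + α₃ + α₄ = m}`. -/
def sliceSet (m : ℕ) : Set (Fin 4 → ℕ) := {α | ∑ j, α j = m}

/-- `S_m^i`: the elements of the slice `S_m` having exactly `i` odd coordinates. -/
def oddSlice (m i : ℕ) : Set (Fin 4 → ℕ) :=
  {α | ∑ j, α j = m ∧ (Finset.univ.filter fun j => Odd (α j)).card = i}

/-- Division with remainder by `2` in each coordinate: every odd coordinate has remainder `1`. -/
theorem sum_eq_two_mul_sum_half_add_card_odd {d : ℕ} (α : Fin d → ℕ) :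
    ∑ j, α j = 2 * ∑ j, α j / 2 + (Finset.univ.filter fun j => Odd (α j)).card := by
  rw [Finset.card_filter, Finset.mul_sum, ← Finset.sum_add_distrib]
  refine Finset.sum_congr rfl fun j _ => ?_
  split_ifs with h <;> rw [Nat.odd_iff] at h <;> omega

/-- The decomposition `2·R_μ = R_{2μ} ⊔ (S_{2μ} ∖ S_{2μ}⁰) ⊔ S_{2μ+1}³ ⊔ S_{2μ+2}⁴`
in `ℕ⁴`, as a disjoint union. -/
theorem double_regStaircase_decomposition (μ : ℕ) (hμ : 1 ≤ μ) :
    scaleSet (fun _ => 2) (regStaircase 4 μ) =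
      regStaircase 4 (2 * μ) ∪ (sliceSet (2 * μ) \ oddSlice (2 * μ) 0) ∪
        oddSlice (2 * μ + 1) 3 ∪ oddSlice (2 * μ + 2) 4 ∧
    ([regStaircase 4 (2 * μ), sliceSet (2 * μ) \ oddSlice (2 * μ) 0,
        oddSlice (2 * μ + 1) 3, oddSlice (2 * μ + 2) 4] :
      List (Set (Fin 4 → ℕ))).Pairwise Disjoint := by
  constructor
  · ext α
    have hsum := sum_eq_two_mul_sum_half_add_card_odd α
    have hcard : (Finset.univ.filter fun j => Odd (α j)).card ≤ 4 :=
      Finset.card_le_univ _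
    simp only [scaleSet, regStaircase, sliceSet, oddSlice, Set.mem_union, Set.mem_sdiff,
      Set.mem_ofPred_eq]
    generalize (Finset.univ.filter fun j => Odd (α j)).card = k at *
    generalize ∑ j, α j / 2 = q at *
    generalize ∑ j, α j = s at *
    omega
  · simp only [List.pairwise_cons, List.mem_cons, List.not_mem_nil, or_false, forall_eq_or_imp,
      forall_eq, false_imp_iff, implies_true, List.Pairwise.nil, and_true, Set.disjoint_left,
      regStaircase, sliceSet, oddSlice, Set.mem_sdiff, Set.mem_ofPred_eq]
    refine ⟨⟨?_, ?_, ?_⟩, ⟨?_, ?_⟩, ?_⟩ <;> intro α h h' <;> omega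
end

section
/- Let s ≥ 4 and μ ≥ 1 be integers, and in ℤ^2 set Δ_1 = (1, −s+1) and Δ_2 = (−s+2, 1). Then Δ_2(Δ_1(s·R_μ)) ⊇ R_{sμ+1} in ℕ^2. -/
/-- If all points of `ℕ^d` strictly after `p` on its line lie in `E`, as well as some point
at or before `p`, then `p` belongs to the specialization of `E`. -/
lemma mem_deltaOf_of_tail {d : ℕ} {Δ : Fin d → ℤ} {E : Set (Fin d → ℕ)} {p : Fin d → ℕ}
    (hΔ : Δ ≠ 0) (hfin : (lineThrough Δ p).Finite)
    (htail : ∀ i : ℕ, 0 < i → ∀ q, toInt q = toInt p + (i : ℤ) • Δ → q ∈ E)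
    (hextra : ∃ e : ℤ, e ≤ 0 ∧ ∃ q ∈ E, toInt q = toInt p + e • Δ) :
    p ∈ deltaOf Δ E := by
  obtain ⟨e, he, q₀, hq₀, hq₀e⟩ := hextra
  have hinj : ∀ a b : ℤ, toInt p + a • Δ = toInt p + b • Δ → a = b := fun a b h =>
    smul_left_injective ℤ hΔ (add_left_cancel h)
  let S : Set ℕ := {i : ℕ | 0 < i ∧ ∃ q : Fin d → ℕ, toInt q = toInt p + (i : ℤ) • Δ}
  change S.ncard < (E ∩ lineThrough Δ p).ncard
  have hS : ∀ i : ℕ, ∃ q : Fin d → ℕ, i ∈ S → toInt q = toInt p + (i : ℤ) • Δ := by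
    intro i
    by_cases hi : i ∈ S
    · exact ⟨hi.2.choose, fun _ => hi.2.choose_spec⟩
    · exact ⟨0, fun h => absurd h hi⟩
  choose g hg using hS
  have hginj : Set.InjOn g S := by
    intro i hi j hj hij
    have h := hg i hi
    rw [hij, hg j hj] at h
    exact_mod_cast (hinj _ _ h).symm
  have hsub : insert q₀ (g '' S) ⊆ E ∩ lineThrough Δ p := by
    rintro q (rfl | ⟨i, hi, rfl⟩)
    · exact ⟨hq₀, e, hq₀e⟩
    · exact ⟨htail i hi.1 _ (hg i hi), i, hg i hi⟩
  have hEfin : (E ∩ lineThrough Δ p).Finite := hfin.subset Set.inter_subset_right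
  have hnot : q₀ ∉ g '' S := by
    rintro ⟨i, hi, rfl⟩
    have h := hinj _ _ ((hg i hi).symm.trans hq₀e)
    have := hi.1
    omega
  have hgfin : (g '' S).Finite := hEfin.subset ((Set.subset_insert _ _).trans hsub)
  have hle := Set.ncard_le_ncard hsub hEfin
  rw [Set.ncard_insert_of_notMem hnot hgfin, hginj.ncard_image] at hle
  omega

/-- A positive linear form that is constant along `Δ` confines the line to a finite box. -/
lemma lineThrough_finite {u v : ℤ} (a b : ℕ) (ha : 0 < a) (hb : 0 < b)
    (hab : a * u + b * v = 0) (p : Fin 2 → ℕ) : (lineThrough ![u, v] p).Finite := by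
  refine (Set.finite_Iic (fun _ : Fin 2 => a * p 0 + b * p 1)).subset ?_
  rintro q ⟨t, ht⟩
  have h0 : (q 0 : ℤ) = p 0 + t * u := by simpa [toInt] using congrFun ht 0
  have h1 : (q 1 : ℤ) = p 1 + t * v := by simpa [toInt] using congrFun ht 1
  have h : a * q 0 + b * q 1 = a * p 0 + b * p 1 := by
    zify
    rw [h0, h1]
    linear_combination t * hab
  intro i
  have h2 := Nat.le_mul_of_pos_left (q 0) ha
  have h3 := Nat.le_mul_of_pos_left (q 1) hb
  fin_cases i <;> simp <;> omega

lemma mem_scaleSet_two {s μ : ℕ} {q : Fin 2 → ℕ} :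
    q ∈ scaleSet (fun _ => s) (regStaircase 2 μ) ↔ q 0 / s + q 1 / s < μ := by
  simp [scaleSet, regStaircase, Fin.sum_univ_two]

/-- A point of coordinate sum below `sμ + s - 2` lies in `Δ₁(s·R_μ)` if it or its predecessor on the
`Δ₁`-line lies in `s·R_μ`: the bound on the sum ensures that all later
points of the line have sum `< sμ`. -/
lemma mem_delta_one {s μ : ℕ} (hs : 4 ≤ s) {p : Fin 2 → ℕ} (hsum : p 0 + p 1 + 3 ≤ s * μ + s)
    (hextra : p 0 / s + p 1 / s < μ ∨ 0 < p 0 ∧ (p 0 - 1) / s + (p 1 + (s - 1)) / s < μ) :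
    p ∈ deltaOf ![1, -(s : ℤ) + 1] (scaleSet (fun _ => s) (regStaircase 2 μ)) := by
  refine mem_deltaOf_of_tail (fun h => by simpa using congrFun h 0)
    (lineThrough_finite (s - 1) 1 (by omega) one_pos (by push_cast [show 1 ≤ s by omega]; ring) p)
    ?_ ?_
  · intro i hi q hq
    have h0 : (q 0 : ℤ) = p 0 + i := by simpa [toInt] using congrFun hq 0
    have h1 : (q 1 : ℤ) = p 1 + i * (-s + 1) := by simpa [toInt] using congrFun hq 1
    rw [mem_scaleSet_two]
    have h2 : (q 0 + q 1 : ℤ) < s * μ := by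
      have : ((i : ℤ) - 1) * (s - 2) ≥ 0 := mul_nonneg (by omega) (by omega)
      zify at hsum
      nlinarith
    have h2' : q 0 + q 1 < s * μ := by exact_mod_cast h2
    have h3 := Nat.mul_div_le (q 0) s
    have h4 := Nat.mul_div_le (q 1) s
    refine lt_of_mul_lt_mul_left (a := s) ?_ (by omega)
    rw [mul_add]
    omega
  · rcases hextra with h | ⟨hp, h⟩
    · exact ⟨0, le_rfl, p, mem_scaleSet_two.2 h, by simp⟩
    · refine ⟨-1, by omega, ![p 0 - 1, p 1 + (s - 1)], mem_scaleSet_two.2 (by simpa using h), ?_⟩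
      funext i
      fin_cases i <;> simp [toInt] <;> omega

/-- `Δ₁(s·R_μ)` contains `R_{sμ+1}` except possibly the point `(0, sμ)`. -/
lemma mem_delta_one_of_le {s μ : ℕ} (hs : 4 ≤ s) {p : Fin 2 → ℕ} (hsum : p 0 + p 1 ≤ s * μ)
    (hne : p 0 = 0 → p 1 < s * μ) :
    p ∈ deltaOf ![1, -(s : ℤ) + 1] (scaleSet (fun _ => s) (regStaircase 2 μ)) := by
  refine mem_delta_one hs (by omega) ?_
  have hs0 : 0 < s := by omega
  have e0 := Nat.div_add_mod (p 0) s
  have e1 := Nat.div_add_mod (p 1) s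
  by_cases h : p 0 / s + p 1 / s < μ
  · exact Or.inl h
  -- Here both coordinates are multiples of `s` with quotients adding up to `μ`.
  have hmul : s * μ ≤ s * (p 0 / s + p 1 / s) := Nat.mul_le_mul_left s (not_lt.1 h)
  rw [mul_add] at hmul
  have hp0 : s * (p 0 / s) = p 0 := by omega
  have hp1 : s * (p 1 / s) = p 1 := by omega
  have hpos : 0 < p 0 := by omega
  refine Or.inr ⟨hpos, ?_⟩
  have hd0 : (p 0 - 1) / s < p 0 / s := by
    rw [Nat.div_lt_iff_lt_mul hs0, mul_comm, hp0]
    omega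
  have hd1 : (p 1 + (s - 1)) / s < p 1 / s + 1 := by
    rw [Nat.div_lt_iff_lt_mul hs0, mul_comm, mul_add, hp1]
    omega
  have hle : p 0 / s + p 1 / s ≤ μ := by
    refine le_of_mul_le_mul_left (a := s) ?_ hs0
    rw [mul_add]
    omega
  omega

/-- Initial case `d = 2`, `s ≥ 4` of the key lemma: with `Δ₁ = (1, −s+1)` and
`Δ₂ = (−s+2, 1)` one has `Δ₂(Δ₁(s·R_μ)) ⊇ R_{sμ+1}` in `ℕ²`. -/
theorem key_lemma_dim_two (s μ : ℕ) (hs : 4 ≤ s) (hμ : 1 ≤ μ) :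
    regStaircase 2 (s * μ + 1) ⊆
      deltaOf ![-(s : ℤ) + 2, 1]
        (deltaOf ![1, -(s : ℤ) + 1]
          (scaleSet (fun _ => s) (regStaircase 2 μ))) := by
  intro p hp
  have hsum : p 0 + p 1 ≤ s * μ := by
    have : p 0 + p 1 < s * μ + 1 := by simpa [regStaircase, Fin.sum_univ_two] using hp
    omega
  have hsμ : s ≤ s * μ := Nat.le_mul_of_pos_right s hμ
  refine mem_deltaOf_of_tail (fun h => by simpa using congrFun h 1)
    (lineThrough_finite 1 (s - 2) one_pos (by omega) (by push_cast [show 2 ≤ s by omega]; ring) p)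
    ?_ ?_
  · intro i hi q hq
    have h0 : (q 0 : ℤ) = p 0 + i * (-s + 2) := by simpa [toInt] using congrFun hq 0
    have h1 : (q 1 : ℤ) = p 1 + i := by simpa [toInt] using congrFun hq 1
    have h2 : (q 0 + q 1 : ℤ) < s * μ := by
      have : ((i : ℤ) - 1) * (s - 3) ≥ 0 := mul_nonneg (by omega) (by omega)
      zify at hsum
      nlinarith
    have h2' : q 0 + q 1 < s * μ := by exact_mod_cast h2
    exact mem_delta_one_of_le hs h2'.le (fun _ => by omega)
  · by_cases h : p 0 = 0 → p 1 < s * μ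
    · exact ⟨0, le_rfl, p, mem_delta_one_of_le hs hsum h, by simp⟩
    · push Not at h
      -- `p = (0, sμ)`, and the preceding point of its line is `(s - 2, sμ - 1)`.
      refine ⟨-1, by omega, ![s - 2, s * μ - 1], mem_delta_one hs ?_ (Or.inl ?_), ?_⟩
      · simp
        omega
      · have h0 : (s - 2) / s = 0 := Nat.div_eq_of_lt (by omega)
        have h1 : (s * μ - 1) / s < μ := by
          rw [Nat.div_lt_iff_lt_mul (by omega), mul_comm μ s]
          omega
        simpa [h0] using h1
      · have h1 : p 1 = s * μ := by omega
        funext i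
        fin_cases i
        · simp [toInt, h.1]
          omega
        · simp [toInt, h1]
          omega
end

section
/- Let μ ≥ 1, and in ℤ^3 set Δ_1 = (1,−2,0), Δ_2 = (−3,0,1) and Δ_3 = (0,1,−2). Then Δ_3(Δ_2(Δ_1(3·R_μ))) ⊇ R_{3μ+1} in ℕ^3. -/
/-- Criterion for membership in a specialization. The line through `p` is enumerated by
`f 0, …, f T`, at most `n` of its points lie strictly beyond `p`, and the indices of the points
outside `E` are confined to the first `k₀`, `k₁`, `k₂` elements of the residue classes `0`, `1`, `2`
modulo `3` together with the final segment `[m, T]`. -/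
lemma mem_deltaOf_of_bad {d : ℕ} (Δ : Fin d → ℤ) (E : Set (Fin d → ℕ)) (p : Fin d → ℕ)
    (f : ℕ → Fin d → ℕ) (T n k₀ k₁ k₂ m : ℕ)
    (hinj : ∀ s t, f s = f t → s = t)
    (hline : ∀ t ≤ T, f t ∈ lineThrough Δ p)
    (hsurj : ∀ q ∈ lineThrough Δ p, ∃ t ≤ T, f t = q)
    (hn : ∀ (i : ℕ) (q : Fin d → ℕ), toInt q = toInt p + (i : ℤ) • Δ → i ≤ n)
    (hbad : ∀ t ≤ T, f t ∉ E → (t % 3 = 0 ∧ t / 3 < k₀) ∨ (t % 3 = 1 ∧ t / 3 < k₁) ∨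
      (t % 3 = 2 ∧ t / 3 < k₂) ∨ m ≤ t)
    (hk : k₀ + k₁ + k₂ + (T + 1 - m) + n ≤ T) :
    p ∈ deltaOf Δ E := by
  classical
  have hcount : Set.ncard {i : ℕ | 0 < i ∧ ∃ q : Fin d → ℕ, toInt q = toInt p + (i : ℤ) • Δ}
      ≤ n := by
    calc _ ≤ Set.ncard (↑(Finset.Icc 1 n) : Set ℕ) := by
          apply Set.ncard_le_ncard _ (Finset.finite_toSet _)
          rintro i ⟨hi, q, hq⟩
          simpa using ⟨hi, hn i q hq⟩
      _ = n := by rw [Set.ncard_coe_finset]; simp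
  set B : Finset ℕ := (Finset.range (T + 1)).filter (fun t => f t ∉ E) with hB
  set G : Finset ℕ := (Finset.range (T + 1)).filter (fun t => f t ∈ E) with hG
  have hBG : G.card + B.card = T + 1 := by
    simpa using Finset.card_filter_add_card_filter_not (s := Finset.range (T + 1))
      (fun t => f t ∈ E)
  have hBcard : B.card ≤ k₀ + k₁ + k₂ + (T + 1 - m) := by
    have hsub : B ⊆ (((Finset.range k₀).image (fun a => 3 * a)
        ∪ (Finset.range k₁).image (fun a => 3 * a + 1))
        ∪ (Finset.range k₂).image (fun a => 3 * a + 2)) ∪ Finset.Ico m (T + 1) := by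
      intro t ht
      simp only [hB, Finset.mem_filter, Finset.mem_range] at ht
      simp only [Finset.mem_union, Finset.mem_image, Finset.mem_range, Finset.mem_Ico]
      rcases hbad t (by omega) ht.2 with h | h | h | h
      · exact Or.inl (Or.inl (Or.inl ⟨t / 3, h.2, by omega⟩))
      · exact Or.inl (Or.inl (Or.inr ⟨t / 3, h.2, by omega⟩))
      · exact Or.inl (Or.inr ⟨t / 3, h.2, by omega⟩)
      · exact Or.inr ⟨h, ht.1⟩
    refine (Finset.card_le_card hsub).trans ?_
    refine (Finset.card_union_le _ _).trans (add_le_add ?_ (by simp))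
    refine (Finset.card_union_le _ _).trans (add_le_add ?_
      (Finset.card_image_le.trans (by simp)))
    exact (Finset.card_union_le _ _).trans (add_le_add
      (Finset.card_image_le.trans (by simp)) (Finset.card_image_le.trans (by simp)))
  have hGle : G.card ≤ Set.ncard (E ∩ lineThrough Δ p) := by
    have hfin : (E ∩ lineThrough Δ p).Finite := by
      apply ((Finset.range (T + 1)).image f).finite_toSet.subset
      rintro q ⟨-, hq⟩
      obtain ⟨t, ht, rfl⟩ := hsurj q hq
      simp only [Finset.coe_image, Set.mem_image, Finset.mem_coe, Finset.mem_range]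
      exact ⟨t, by omega, rfl⟩
    rw [← Finset.card_image_of_injective G (fun s t h => hinj s t h), ← Set.ncard_coe_finset]
    apply Set.ncard_le_ncard _ hfin
    intro q hq
    simp only [Finset.coe_image, Set.mem_image, Finset.mem_coe, hG, Finset.mem_filter,
      Finset.mem_range] at hq
    obtain ⟨t, ⟨ht, htE⟩, rfl⟩ := hq
    exact ⟨htE, hline t (by omega)⟩
  exact lt_of_le_of_lt hcount (by omega)

lemma toInt_eq_three_iff (q p : Fin 3 → ℕ) (t a b c : ℤ) :
    toInt q = toInt p + t • ![a, b, c] ↔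
      (q 0 : ℤ) = p 0 + t * a ∧ (q 1 : ℤ) = p 1 + t * b ∧ (q 2 : ℤ) = p 2 + t * c := by
  simp [funext_iff, Fin.forall_fin_succ, toInt, Matrix.vecHead, Matrix.vecTail]

lemma mem_scaled_regStaircase_iff (μ : ℕ) (p : Fin 3 → ℕ) :
    p ∈ scaleSet (fun _ => 3) (regStaircase 3 μ) ↔ p 0 / 3 + p 1 / 3 + p 2 / 3 < μ := by
  simp [scaleSet, regStaircase, Fin.sum_univ_three]

/-- The specialization along `Δ₁` contains `{x + y + 3⌊z/3⌋ ≤ 3μ, y + 3⌊z/3⌋ < 3μ}`. -/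
lemma mem_delta₁ (μ : ℕ) (p : Fin 3 → ℕ) (h₁ : p 0 + p 1 + 3 * (p 2 / 3) ≤ 3 * μ)
    (h₂ : p 1 + 3 * (p 2 / 3) < 3 * μ) :
    p ∈ deltaOf ![1, -2, 0] (scaleSet (fun _ => 3) (regStaircase 3 μ)) := by
  obtain ⟨x, hx⟩ : ∃ x, x = p 0 := ⟨_, rfl⟩
  obtain ⟨y, hy⟩ : ∃ y, y = p 1 := ⟨_, rfl⟩
  obtain ⟨z, hz⟩ : ∃ z, z = p 2 := ⟨_, rfl⟩
  rw [← hx, ← hy, ← hz] at h₁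
  rw [← hy, ← hz] at h₂
  -- Moving by `3` along the line lowers `⌊x/3⌋ + ⌊y/3⌋` by exactly `1`, so in the class of `r` the
  -- bad indices `3a + r` satisfy `a ≤ ⌊(2x + y - 2r)/3⌋ + ⌊z/3⌋ - μ`.
  refine mem_deltaOf_of_bad _ _ p (fun t => ![t, 2 * x + y - 2 * t, z]) (x + y / 2) (y / 2)
    ((2 * x + y) / 3 + z / 3 + 1 - μ) ((2 * x + y + 1) / 3 + z / 3 - μ)
    ((2 * x + y + 2) / 3 + z / 3 - 1 - μ)
    (x + y / 2 + 1) ?_ ?_ ?_ ?_ ?_ ?_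
  · intro s t h
    simpa using congrFun h 0
  · intro t ht
    refine ⟨(t : ℤ) - x, ?_⟩
    rw [toInt_eq_three_iff]
    simp
    omega
  · rintro q ⟨s, hs⟩
    rw [toInt_eq_three_iff] at hs
    refine ⟨q 0, by omega, ?_⟩
    simp [funext_iff, Fin.forall_fin_succ]
    omega
  · intro i q hq
    rw [toInt_eq_three_iff] at hq
    omega
  · intro t ht hE
    rw [mem_scaled_regStaircase_iff] at hE
    simp at hE
    omega
  · have hsum : (2 * x + y) / 3 + (2 * x + y + 1) / 3 + (2 * x + y + 2) / 3 = 2 * x + y := by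
      omega
    omega

/-- The specialization along `Δ₂` contains `{x + y + 3⌊z/3⌋ ≤ 3μ, y < 3μ}` with two families of
boundary points removed. -/
lemma mem_delta₂ (μ : ℕ) (p : Fin 3 → ℕ) (h₁ : p 0 + p 1 + 3 * (p 2 / 3) ≤ 3 * μ)
    (h₂ : p 1 < 3 * μ) (h₃ : ¬ (p 1 % 3 = 0 ∧ p 0 = 3 ∧ p 1 + p 2 + 1 = 3 * μ))
    (h₄ : p 1 + 3 * (p 2 / 3) = 3 * μ → p 2 % 3 = 0) :
    p ∈ deltaOf ![-3, 0, 1]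
      (deltaOf ![1, -2, 0] (scaleSet (fun _ => 3) (regStaircase 3 μ))) := by
  obtain ⟨x, hx⟩ : ∃ x, x = p 0 := ⟨_, rfl⟩
  obtain ⟨y, hy⟩ : ∃ y, y = p 1 := ⟨_, rfl⟩
  obtain ⟨z, hz⟩ : ∃ z, z = p 2 := ⟨_, rfl⟩
  rw [← hx, ← hy, ← hz] at h₁ h₃
  rw [← hy] at h₂
  rw [← hy, ← hz] at h₄
  -- The index `3a + r` violates `x + y + 3⌊z/3⌋ ≤ 3μ` iff `6a < x + 3z + y - 3r - 3μ`; the indices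
  -- violating `y + 3⌊z/3⌋ < 3μ` form a final segment starting at a multiple of `3`.
  refine mem_deltaOf_of_bad _ _ p (fun t => ![x + 3 * z - 3 * t, y, t]) (z + x / 3) (x / 3)
    ((x + 3 * z + y + 5 - 3 * μ) / 6) ((x + 3 * z + y + 2 - 3 * μ) / 6)
    ((x + 3 * z + y - 1 - 3 * μ) / 6)
    (3 * ((3 * μ - y + 2) / 3)) ?_ ?_ ?_ ?_ ?_ ?_
  · intro s t h
    simpa using congrFun h 2
  · intro t ht
    refine ⟨(t : ℤ) - z, ?_⟩
    rw [toInt_eq_three_iff]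
    simp
    omega
  · rintro q ⟨s, hs⟩
    rw [toInt_eq_three_iff] at hs
    refine ⟨q 2, by omega, ?_⟩
    simp [funext_iff, Fin.forall_fin_succ]
    omega
  · intro i q hq
    rw [toInt_eq_three_iff] at hq
    omega
  · intro t ht hE
    have hE' : ¬ (x + 3 * z - 3 * t + y + 3 * (t / 3) ≤ 3 * μ ∧ y + 3 * (t / 3) < 3 * μ) :=
      fun h => hE (mem_delta₁ μ _ (by simpa using h.1) (by simpa using h.2))
    omega
  · omega

/-- Initial case `s = 3`, `d = 3` of the key lemma: with `Δ₁ = (1,−2,0)`,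
`Δ₂ = (−3,0,1)` and `Δ₃ = (0,1,−2)` one has `Δ₃(Δ₂(Δ₁(3·R_μ))) ⊇ R_{3μ+1}` in `ℕ³`. -/
theorem key_lemma_three_cubed (μ : ℕ) (hμ : 1 ≤ μ) :
    regStaircase 3 (3 * μ + 1) ⊆
      deltaOf ![0, 1, -2]
        (deltaOf ![-3, 0, 1]
          (deltaOf ![1, -2, 0]
            (scaleSet (fun _ => 3) (regStaircase 3 μ)))) := by
  intro p hp
  obtain ⟨x, hx⟩ : ∃ x, x = p 0 := ⟨_, rfl⟩
  obtain ⟨y, hy⟩ : ∃ y, y = p 1 := ⟨_, rfl⟩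
  obtain ⟨z, hz⟩ : ∃ z, z = p 2 := ⟨_, rfl⟩
  have h : x + y + z ≤ 3 * μ := by
    have : p 0 + p 1 + p 2 < 3 * μ + 1 := by
      simpa [regStaircase, Fin.sum_univ_three] using hp
    omega
  -- The index `3a + r` violates `x + y + 3⌊z/3⌋ ≤ 3μ` iff `3a < x + r + 3⌊(2y + z - 2r)/3⌋ - 3μ`.
  -- The removed points and the bound `y < 3μ` only affect the class `r = 0`, for `x = 0` or `x = 3`,
  -- where they lengthen the initial segment by at most one.
  obtain ⟨k₀, hk₀⟩ : ∃ k₀ : ℕ, k₀ =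
      if x = 0 ∧ ((2 * y + z) % 3 ≠ 0 ∨ 2 * y + z = 6 * μ) then (2 * y + z) / 3 + 1 - μ
      else if x = 3 ∧ (2 * y + z) % 3 = 2 then (2 * y + z) / 3 + 2 - μ
      else (x + 3 * ((2 * y + z) / 3) + 2 - 3 * μ) / 3 := ⟨_, rfl⟩
  refine mem_deltaOf_of_bad _ _ p (fun t => ![x, t, 2 * y + z - 2 * t]) (y + z / 2) (z / 2)
    k₀ ((x + 3 * ((2 * y + z + 1) / 3) - 3 * μ) / 3)
    ((x + 3 * ((2 * y + z + 2) / 3) - 2 - 3 * μ) / 3)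
    (y + z / 2 + 1) ?_ ?_ ?_ ?_ ?_ ?_
  · intro s t h
    simpa using congrFun h 1
  · intro t ht
    refine ⟨(t : ℤ) - y, ?_⟩
    rw [toInt_eq_three_iff]
    simp
    omega
  · rintro q ⟨s, hs⟩
    rw [toInt_eq_three_iff] at hs
    refine ⟨q 1, by omega, ?_⟩
    simp [funext_iff, Fin.forall_fin_succ]
    omega
  · intro i q hq
    rw [toInt_eq_three_iff] at hq
    omega
  · intro t ht hE
    have hE' : ¬ (x + t + 3 * ((2 * y + z - 2 * t) / 3) ≤ 3 * μ ∧ t < 3 * μ ∧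
        ¬ (t % 3 = 0 ∧ x = 3 ∧ t + (2 * y + z - 2 * t) + 1 = 3 * μ) ∧
        (t + 3 * ((2 * y + z - 2 * t) / 3) = 3 * μ → (2 * y + z - 2 * t) % 3 = 0)) :=
      fun h => hE (mem_delta₂ μ _ (by simpa using h.1) (by simpa using h.2.1)
        (by simpa using h.2.2.1) (by simpa using h.2.2.2))
    clear hE hp hx hy hz
    have hr : t % 3 = 0 ∨ t % 3 = 1 ∨ t % 3 = 2 := by omega
    rcases hr with hr | hr | hr
    · have hdiv : (2 * y + z - 2 * t) / 3 + 2 * (t / 3) = (2 * y + z) / 3 := by omega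
      refine Or.inl ⟨hr, ?_⟩
      split_ifs at hk₀ <;> omega
    · have hdiv : (2 * y + z - 2 * t) / 3 + 2 * (t / 3) + 1 = (2 * y + z + 1) / 3 := by omega
      clear hk₀
      refine Or.inr (Or.inl ⟨hr, ?_⟩)
      omega
    · have hdiv : (2 * y + z - 2 * t) / 3 + 2 * (t / 3) + 2 = (2 * y + z + 2) / 3 := by omega
      clear hk₀
      refine Or.inr (Or.inr (Or.inl ⟨hr, ?_⟩))
      omega
  · clear hp hx hy hz
    split_ifs at hk₀ <;> omega
end

section
/- Let μ ≥ 1 and let Δ = (1, −1, −1) ∈ ℤ^3. Then R_{2μ} ⊆ Δ(2·R_μ) ⊆ R_{2μ+1} in ℕ^3. -/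
/-- The point `p + tΔ` for `p = (a, b, c)` and `Δ = (1, -1, -1)`; it is meant for `t ≤ min b c`, so
that the subtractions do not truncate. -/
def shiftPt (a b c t : ℕ) : Fin 3 → ℕ := ![a + t, b - t, c - t]

theorem toInt_eq_add_smul_iff (p q : Fin 3 → ℕ) (t : ℤ) :
    toInt q = toInt p + t • ![1, -1, -1] ↔
      (q 0 : ℤ) = p 0 + t ∧ (q 1 : ℤ) = p 1 - t ∧ (q 2 : ℤ) = p 2 - t := by
  simp [funext_iff, Fin.forall_fin_succ, toInt, sub_eq_add_neg, Matrix.vecHead, Matrix.vecTail]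

theorem mem_scaleSet_two_iff (μ : ℕ) (q : Fin 3 → ℕ) :
    q ∈ scaleSet (fun _ => 2) (regStaircase 3 μ) ↔ q 0 / 2 + q 1 / 2 + q 2 / 2 < μ := by
  simp [scaleSet, regStaircase, Fin.sum_univ_three]

theorem ncard_steps (p : Fin 3 → ℕ) :
    Set.ncard {i : ℕ | 0 < i ∧ ∃ q : Fin 3 → ℕ, toInt q = toInt p + (i : ℤ) • ![1, -1, -1]}
      = min (p 1) (p 2) := by
  have h : {i : ℕ | 0 < i ∧ ∃ q : Fin 3 → ℕ, toInt q = toInt p + (i : ℤ) • ![1, -1, -1]}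
      = ((Finset.Icc 1 (min (p 1) (p 2)) : Finset ℕ) : Set ℕ) := by
    ext i
    simp only [toInt_eq_add_smul_iff, Set.mem_ofPred_eq, Finset.coe_Icc, Set.mem_Icc]
    constructor
    · rintro ⟨h0, q, h1, h2, h3⟩
      omega
    · rintro ⟨h0, h1⟩
      refine ⟨h0, shiftPt (p 0) (p 1) (p 2) i, ?_⟩
      simp [shiftPt]
      omega
  rw [h, Set.ncard_coe_finset]
  simp

theorem finite_lineThrough_s19 (p : Fin 3 → ℕ) : (lineThrough ![1, -1, -1] p).Finite := by
  refine (Set.finite_Iic (fun _ : Fin 3 => p 0 + p 1 + p 2)).subset ?_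
  rintro q ⟨t, ht⟩
  rw [toInt_eq_add_smul_iff] at ht
  intro i
  fin_cases i <;> simp <;> omega

/-- In `ℕ³`, with `Δ = (1,−1,−1)`: `R_{2μ} ⊆ Δ(2·R_μ) ⊆ R_{2μ+1}`. -/
theorem deltaOf_double_regStaircase_between (μ : ℕ) (hμ : 1 ≤ μ) :
    regStaircase 3 (2 * μ) ⊆
      deltaOf ![1, -1, -1] (scaleSet (fun _ => 2) (regStaircase 3 μ)) ∧
    deltaOf ![1, -1, -1] (scaleSet (fun _ => 2) (regStaircase 3 μ)) ⊆
      regStaircase 3 (2 * μ + 1) := by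
  constructor
  · intro p hp
    simp only [regStaircase, Set.mem_ofPred_eq, Fin.sum_univ_three] at hp
    rw [deltaOf, Set.mem_ofPred_eq, ncard_steps]
    have hinj : Function.Injective (shiftPt (p 0) (p 1) (p 2)) := by
      intro s t hst
      simpa [shiftPt] using congrFun hst 0
    have hsub : (((Finset.range (min (p 1) (p 2) + 1)).image (shiftPt (p 0) (p 1) (p 2)) :
        Finset (Fin 3 → ℕ)) : Set (Fin 3 → ℕ)) ⊆
        scaleSet (fun _ => 2) (regStaircase 3 μ) ∩ lineThrough ![1, -1, -1] p := by
      intro q hq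
      simp only [Finset.coe_image, Set.mem_image, Finset.coe_range, Set.mem_Iio] at hq
      obtain ⟨t, ht, rfl⟩ := hq
      refine ⟨?_, (t : ℤ), ?_⟩
      · rw [mem_scaleSet_two_iff]
        simp [shiftPt]
        omega
      · rw [toInt_eq_add_smul_iff]
        simp [shiftPt]
        omega
    have := Set.ncard_le_ncard hsub ((finite_lineThrough_s19 p).subset Set.inter_subset_right)
    rw [Set.ncard_coe_finset, Finset.card_image_of_injective _ hinj, Finset.card_range] at this
    omega
  · intro p hp
    rw [deltaOf, Set.mem_ofPred_eq, ncard_steps] at hp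
    simp only [regStaircase, Set.mem_ofPred_eq, Fin.sum_univ_three]
    by_contra! hS
    -- `p + eΔ` is the point of the line missing from the scaled staircase.
    obtain ⟨e, he, hmiss⟩ : ∃ e ≤ min (p 1) (p 2),
        μ ≤ (p 0 + e) / 2 + (p 1 - e) / 2 + (p 2 - e) / 2 := by
      by_cases h : μ ≤ p 0 / 2 + p 1 / 2 + p 2 / 2
      · exact ⟨0, by omega, by simpa using h⟩
      · exact ⟨1, by omega, by omega⟩
    have hsub : scaleSet (fun _ => 2) (regStaircase 3 μ) ∩ lineThrough ![1, -1, -1] p ⊆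
        ((((Finset.range (min (p 1) (p 2) + 1)).erase e).image (shiftPt (p 0) (p 1) (p 2)) :
        Finset (Fin 3 → ℕ)) : Set (Fin 3 → ℕ)) := by
      rintro q ⟨hqE, t, ht⟩
      rw [mem_scaleSet_two_iff] at hqE
      rw [toInt_eq_add_smul_iff] at ht
      obtain ⟨h0, h1, h2⟩ := ht
      have ht0 : 0 ≤ t := by omega
      lift t to ℕ using ht0
      rw [Finset.mem_coe, Finset.mem_image]
      refine ⟨t, ?_, ?_⟩
      · rw [Finset.mem_erase, Finset.mem_range]
        refine ⟨?_, by omega⟩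
        rintro rfl
        have e0 : q 0 = p 0 + t := by omega
        have e1 : q 1 = p 1 - t := by omega
        have e2 : q 2 = p 2 - t := by omega
        rw [e0, e1, e2] at hqE
        omega
      · ext i
        fin_cases i <;> simp [shiftPt] <;> omega
    have h1 := Set.ncard_le_ncard hsub (Finset.finite_toSet _)
    rw [Set.ncard_coe_finset] at h1
    have h2 := h1.trans Finset.card_image_le
    rw [Finset.card_erase_of_mem (Finset.mem_range.2 (by omega)), Finset.card_range] at h2
    rw [Nat.add_sub_cancel] at h2
    exact absurd hp h2.not_gt
end
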